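/- arXiv:1710.01817 — 2 statements merged into one kernel-verified Lean document; each statement's English description precedes it below -/
import Mathlib

section
/- Let R be a commutative ring with an anti-involution α, let B = R^α/N(R) be the quotient commutative ring, and let T = B ⊗_ℤ B, a commutative ring. Let I ⊆ T be the additive subgroup generated by all elements [α(s)·r·s] ⊗ [t] − [r] ⊗ [s·t·α(s)] with s ∈ R and r, t ∈ R^α (here [a] denotes the class in B of an element a ∈ R^α), and let J ⊆ T be the ideal generated by the elements [r·α(r)] ⊗ [1] − [1] ⊗ [r·α(r)] with r ∈ R. Then I = J; in particular the subgroup I is an ideal of T. -/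
open TensorProduct

/-!
Since `R` is commutative, the generator `[α s * r * s] ⊗ [t] - [r] ⊗ [s * t * α s]` is the product
of the simple tensor `[r] ⊗ [t]` with `[s * α s] ⊗ [1] - [1] ⊗ [s * α s]`. Simple tensors generate
`B ⊗ B` additively, so their products with the generators of an ideal generate that ideal as an
additive group.
-/

open scoped Pointwise in
theorem toAddSubgroup_span_eq_closure_smul {A M : Type*} [Ring A] [AddCommGroup M] [Module A M]
    {G : Set A} (hG : AddSubgroup.closure G = ⊤) (X : Set M) :
    (Submodule.span A X).toAddSubgroup = AddSubgroup.closure (G • X) := by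
  apply le_antisymm
  · intro z hz
    have smul_mem (a : A) (x : M) (hx : x ∈ X) : a • x ∈ AddSubgroup.closure (G • X) := by
      have ha : a ∈ AddSubgroup.closure G := hG ▸ AddSubgroup.mem_top a
      induction ha using AddSubgroup.closure_induction with
      | mem g hg => exact AddSubgroup.subset_closure (Set.smul_mem_smul hg hx)
      | zero => simpa only [zero_smul] using zero_mem _
      | add a b _ _ iha ihb => simpa only [add_smul] using add_mem iha ihb
      | neg a _ iha => simpa only [neg_smul] using neg_mem iha
    induction hz using Submodule.closure_induction with
    | zero => exact zero_mem _
    | add x y _ _ ihx ihy => exact add_mem ihx ihy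
    | smul_mem a x hx => exact smul_mem a x hx
  · rw [AddSubgroup.closure_le]
    rintro _ ⟨a, -, x, hx, rfl⟩
    exact Submodule.smul_mem _ a (Submodule.subset_span hx)

theorem addSubgroupClosure_tmul_eq_top (k M N : Type*) [CommSemiring k] [AddCommGroup M]
    [AddCommMonoid N] [Module k M] [Module k N] :
    AddSubgroup.closure {z : M ⊗[k] N | ∃ m n, m ⊗ₜ n = z} = ⊤ := by
  refine eq_top_iff.2 fun z _ => ?_
  induction z using TensorProduct.induction_on with
  | zero => exact zero_mem _
  | tmul m n => exact AddSubgroup.subset_closure ⟨m, n, rfl⟩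
  | add x y ihx ihy => exact add_mem (ihx trivial) (ihy trivial)

section Balancing

variable {k A B : Type*} [CommSemiring k] [Ring A] [Semiring B] [Algebra k A] [Algebra k B]

theorem tmul_mul_tmul_one_sub_one_tmul (a c : A) (b d : B) :
    a ⊗ₜ[k] b * (c ⊗ₜ[k] 1 - 1 ⊗ₜ[k] d) = (a * c) ⊗ₜ[k] b - a ⊗ₜ[k] (b * d) := by
  simp only [mul_sub, Algebra.TensorProduct.tmul_mul_tmul, mul_one]

theorem closure_tmul_sub_tmul_eq_span {ι : Type*} (f : ι → A) (g : ι → B) :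
    AddSubgroup.closure {z : A ⊗[k] B | ∃ i a b, z = (a * f i) ⊗ₜ b - a ⊗ₜ (b * g i)} =
      (Ideal.span {z : A ⊗[k] B | ∃ i, z = f i ⊗ₜ 1 - 1 ⊗ₜ g i}).toAddSubgroup := by
  rw [Ideal.span, toAddSubgroup_span_eq_closure_smul (addSubgroupClosure_tmul_eq_top k A B)]
  congr 1
  ext z
  constructor
  · rintro ⟨i, a, b, rfl⟩
    exact ⟨_, ⟨a, b, rfl⟩, _, ⟨i, rfl⟩, tmul_mul_tmul_one_sub_one_tmul a (f i) b (g i)⟩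
  · rintro ⟨_, ⟨a, b, rfl⟩, _, ⟨i, rfl⟩, rfl⟩
    exact ⟨i, a, b, tmul_mul_tmul_one_sub_one_tmul a (f i) b (g i)⟩

end Balancing

theorem relations_subgroup_eq_ideal_general {k R : Type*} [CommSemiring k] [CommRing R]
    (α : R → R) (S : Subring R) (mul_map_mem : ∀ s : R, s * α s ∈ S)
    (NI : Ideal S) [Algebra k (S ⧸ NI)] :
    SetLike.coe (AddSubgroup.closure
        {z : (S ⧸ NI) ⊗[k] (S ⧸ NI) |
          ∃ (s : R) (r t a b : S), ((a : R) = α s * (r : R) * s) ∧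
            ((b : R) = s * (t : R) * α s) ∧
            z = (Ideal.Quotient.mk NI a) ⊗ₜ[k] (Ideal.Quotient.mk NI t)
              - (Ideal.Quotient.mk NI r) ⊗ₜ[k] (Ideal.Quotient.mk NI b)}) =
      SetLike.coe (Ideal.span
        {z : (S ⧸ NI) ⊗[k] (S ⧸ NI) |
          ∃ (r : R) (c : S), ((c : R) = r * α r) ∧
            z = (Ideal.Quotient.mk NI c) ⊗ₜ[k] (Ideal.Quotient.mk NI 1)
              - (Ideal.Quotient.mk NI 1) ⊗ₜ[k] (Ideal.Quotient.mk NI c)}) := by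
  let hermitianSquare (s : R) : S := ⟨s * α s, mul_map_mem s⟩
  have eq_mul_square_left {s : R} {r a : S} :
      (a : R) = α s * r * s ↔ a = r * hermitianSquare s := by
    rw [Subtype.ext_iff, Subring.coe_mul, mul_right_comm, mul_comm (α s), mul_comm (s * α s)]
  have eq_mul_square_right {s : R} {t b : S} :
      (b : R) = s * t * α s ↔ b = t * hermitianSquare s := by
    rw [Subtype.ext_iff, Subring.coe_mul, mul_right_comm, mul_comm (s * α s)]
  have eq_square {s : R} {c : S} : (c : R) = s * α s ↔ c = hermitianSquare s := by
    rw [Subtype.ext_iff]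
  let squareClass (s : R) : S ⧸ NI := Ideal.Quotient.mk NI (hermitianSquare s)
  have balanced := congrArg SetLike.coe
    (closure_tmul_sub_tmul_eq_span (k := k) squareClass squareClass)
  simpa only [squareClass, eq_mul_square_left, eq_mul_square_right, eq_square, exists_and_left,
    exists_eq_left, map_mul, map_one, Ideal.Quotient.mk_surjective.exists,
    Submodule.coe_toAddSubgroup] using balanced

/-- Let `R` be a commutative ring with an anti-involution `α`, let
`S = R^α` be the subring of fixed points, `NI ⊆ S` the ideal given by the image of the norm map
`N r = r + α r`, and `B = S ⧸ NI` the quotient commutative ring.  In `T = B ⊗[ℤ] B`, the additive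
subgroup generated by the elements `[α s * r * s] ⊗ [t] - [r] ⊗ [s * t * α s]` (for `s ∈ R`,
`r, t ∈ R^α`) equals the ideal generated by the elements `[r * α r] ⊗ [1] - [1] ⊗ [r * α r]`
(for `r ∈ R`); in particular that additive subgroup is an ideal of `T`. -/
theorem relations_subgroup_eq_ideal {R : Type*} [CommRing R] (α : R → R)
    (hadd : ∀ x y : R, α (x + y) = α x + α y)
    (hmul : ∀ x y : R, α (x * y) = α y * α x)
    (hone : α 1 = 1)
    (hinv : ∀ x : R, α (α x) = x)
    (S : Subring R) (hS : ∀ x : R, x ∈ S ↔ α x = x)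
    (NI : Ideal S) (hNI : ∀ x : S, x ∈ NI ↔ ∃ r : R, r + α r = (x : R)) :
    SetLike.coe (AddSubgroup.closure
        {z : (S ⧸ NI) ⊗[ℤ] (S ⧸ NI) |
          ∃ (s : R) (r t a b : S), ((a : R) = α s * (r : R) * s) ∧
            ((b : R) = s * (t : R) * α s) ∧
            z = (Ideal.Quotient.mk NI a) ⊗ₜ[ℤ] (Ideal.Quotient.mk NI t)
              - (Ideal.Quotient.mk NI r) ⊗ₜ[ℤ] (Ideal.Quotient.mk NI b)}) =
      SetLike.coe (Ideal.span
        {z : (S ⧸ NI) ⊗[ℤ] (S ⧸ NI) |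
          ∃ (r : R) (c : S), ((c : R) = r * α r) ∧
            z = (Ideal.Quotient.mk NI c) ⊗ₜ[ℤ] (Ideal.Quotient.mk NI 1)
              - (Ideal.Quotient.mk NI 1) ⊗ₜ[ℤ] (Ideal.Quotient.mk NI c)}) :=
  relations_subgroup_eq_ideal_general α S (fun s => (hS _).2 (by rw [hmul, hinv])) NI
end

section
/- Let A be an associative unital ring, let V : ℤ → A be an injective homomorphism of additive groups whose image has index 2 in the additive group of A (i.e., the quotient group A/V(ℤ) has exactly two elements), and let F : A → ℤ be a ring homomorphism such that F(V(n)) = 2n for all n ∈ ℤ. Then F is bijective. -/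
/-! If `F (V n) = d n` and `V(ℤ)` has index `d ≠ 0`, then `F` is injective on `V(ℤ)` and maps it
onto `dℤ`. As `F` is surjective, `V(ℤ) + ker F` has the same index in `A` as `dℤ` has in `ℤ`,
namely `d`. This is also the index of `V(ℤ)`, so `ker F ⊆ V(ℤ)`, where `F` is injective. -/

section Index

variable {G G' : Type*} [AddGroup G] [AddGroup G'] {f : G →+ G'} {H : AddSubgroup G}

theorem ker_le_of_index_map_eq [H.FiniteIndex] (hf : Function.Surjective f)
    (hindex : (H.map f).index = H.index) : f.ker ≤ H := by
  have hsup : (H ⊔ f.ker).index = H.index := by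
    rw [← hindex, H.index_map, f.range_eq_top_of_surjective hf, AddSubgroup.index_top, mul_one]
  by_contra hker
  exact (AddSubgroup.index_strictAnti (left_lt_sup.mpr hker)).ne hsup

theorem injective_of_index_map_eq [H.FiniteIndex] (hf : Function.Surjective f)
    (hinj : Set.InjOn f H) (hindex : (H.map f).index = H.index) : Function.Injective f := by
  rw [injective_iff_map_eq_zero]
  intro a ha
  have haH : a ∈ H := ker_le_of_index_map_eq hf hindex ha
  exact hinj haH H.zero_mem (ha.trans f.map_zero.symm)

end Index

theorem injective_of_index_range_eq {A : Type*} [AddGroup A] {d : ℕ} (hd : d ≠ 0)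
    {V : ℤ →+ A} (hindex : V.range.index = d)
    {F : A →+ ℤ} (hF : Function.Surjective F) (hFV : ∀ n : ℤ, F (V n) = d * n) :
    Function.Injective F := by
  have : V.range.FiniteIndex := ⟨hindex.trans_ne hd⟩
  have hinj : Set.InjOn F V.range := by
    rintro _ ⟨m, rfl⟩ _ ⟨n, rfl⟩ hmn
    rw [hFV, hFV] at hmn
    rw [mul_left_cancel₀ (Nat.cast_ne_zero.mpr hd) hmn]
  have himage : V.range.map F = AddSubgroup.zmultiples (d : ℤ) := by
    ext x
    simp [AddSubgroup.mem_zmultiples_iff, hFV, mul_comm]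
  have hindex_image : (V.range.map F).index = V.range.index := by
    rw [himage, Int.index_zmultiples, Int.natAbs_natCast, hindex]
  exact injective_of_index_map_eq hF hinj hindex_image

theorem ringHom_int_surjective {A : Type*} [NonAssocRing A] (F : A →+* ℤ) :
    Function.Surjective F :=
  fun n => ⟨n, map_intCast F n⟩

theorem ringHom_bijective_of_index_two_general {A : Type*} [NonAssocRing A] {d : ℕ} (hd : d ≠ 0)
    (V : ℤ →+ A) (hindex : Nat.card (A ⧸ V.range) = d)
    (F : A →+* ℤ) (hFV : ∀ n : ℤ, F (V n) = d * n) :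
    Function.Bijective F :=
  have hF : Function.Surjective F := ringHom_int_surjective F
  ⟨injective_of_index_range_eq (F := F.toAddMonoidHom) hd hindex hF hFV, hF⟩

/-- Let `A` be an associative unital ring, `V : ℤ → A` an injective additive
group homomorphism whose image has index 2 (the quotient group `A / V(ℤ)` has exactly two
elements), and `F : A → ℤ` a ring homomorphism with `F (V n) = 2 n` for all `n`.  Then `F` is
bijective. -/
theorem ringHom_bijective_of_index_two {A : Type*} [Ring A]
    (V : ℤ →+ A) (hV : Function.Injective V)
    (hindex : Nat.card (A ⧸ V.range) = 2)
    (F : A →+* ℤ) (hFV : ∀ n : ℤ, F (V n) = 2 * n) :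
    Function.Bijective F :=
  ringHom_bijective_of_index_two_general two_ne_zero V hindex F hFV
end
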